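/- Suppose there is an ordinal α such that D {n} α {(true, n)} holds for every natural number n. Then there exists a function β : ℕ → Ordinal such that β m ≤ α for all m, and β m < β k whenever k < m and m ≺* k. (Existence of the ordinal ranks β(m) satisfying condition (3) in the proof of Theorem 7.) -/

import Mathlib

/-!
The classical boundedness argument. From a derivation of `Γ` with bound `β` from `ℰ`, where `Γ`
has only positive literals, some `m ∈ ℰ` with `(true, m) ∈ Γ` has rank bounded by `β` in `≺*`
(`D.exists_rankBound`). At an inference `(prg)` with principal literal `E(m)`, each premise bounds
the rank of its new element `n` or of an old one; if no premise bounds an old one, then all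
`n ≺* m` are bounded by `β₀ < β`, hence `m` is bounded by `β`. Applied to `D {n} α {E(n)}`, this
bounds the rank of every `n` by `α`, and the least such bounds are the required ordinals.
-/

open Ordinal

/-- The calculus `Diag(∅)+(prg)^D`: `D R ℰ β Γ` says that the sequent `Γ` of literals
(`(true, n)` is the positive literal `E(n)`, `(false, n)` the negative `Ē(n)`) is derivable
with ordinal bound `β` from the finite side set `ℰ`. -/
inductive D (R : ℕ → ℕ → Prop) : Finset ℕ → Ordinal → Finset (Bool × ℕ) → Prop
  | ax {ℰ : Finset ℕ} {β : Ordinal} {Γ : Finset (Bool × ℕ)} (n : ℕ)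
      (h : (false, n) ∈ Γ) : D R ℰ β Γ
  | rep {ℰ : Finset ℕ} {β : Ordinal} {Γ : Finset (Bool × ℕ)} (γ : Ordinal)
      (hγ : γ < β) (hd : D R ℰ γ Γ) : D R ℰ β Γ
  | prg {ℰ : Finset ℕ} {β : Ordinal} {Γ : Finset (Bool × ℕ)} (m : ℕ)
      (hm : (true, m) ∈ Γ) (hℰ : m ∈ ℰ) (β₀ : Ordinal) (hβ₀ : β₀ < β)
      (h : ∀ n, Relation.TransGen R n m →
        D R (insert n ℰ) β₀ (insert (true, n) Γ)) : D R ℰ β Γ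

/-- `RankBound R β m`: the ordinal `β` bounds the rank of `m` with respect to the transitive
closure of `R`. All predecessors of `m` are required to share a bound `γ < β`, so that `β` is
strictly positive and minimal elements have least bound `1`. No well-foundedness of `R` is
presupposed. -/
inductive RankBound (R : ℕ → ℕ → Prop) : Ordinal → ℕ → Prop
  | mk {β : Ordinal} {m : ℕ} (γ : Ordinal) (hγ : γ < β)
      (h : ∀ n, Relation.TransGen R n m → RankBound R γ n) : RankBound R β m

lemma RankBound.mono {R : ℕ → ℕ → Prop} {β β' : Ordinal} {m : ℕ}
    (h : RankBound R β m) (hβ : β ≤ β') : RankBound R β' m := by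
  obtain ⟨γ, hγ, h⟩ := h
  exact ⟨γ, hγ.trans_le hβ, h⟩

lemma D.exists_rankBound {R : ℕ → ℕ → Prop} {ℰ : Finset ℕ} {β : Ordinal}
    {Γ : Finset (Bool × ℕ)} (d : D R ℰ β Γ) (hΓ : ∀ n, (false, n) ∉ Γ) :
    ∃ m ∈ ℰ, (true, m) ∈ Γ ∧ RankBound R β m := by
  induction d with
  | ax n h => exact absurd h (hΓ n)
  | rep γ hγ _ ih =>
    obtain ⟨m, hm, hm', hr⟩ := ih hΓ
    exact ⟨m, hm, hm', hr.mono hγ.le⟩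
  | @prg ℰ β Γ m hm hℰ β₀ hβ₀ _ ih =>
    by_cases hold : ∃ k ∈ ℰ, (true, k) ∈ Γ ∧ RankBound R β₀ k
    · obtain ⟨k, hk, hk', hr⟩ := hold
      exact ⟨k, hk, hk', hr.mono hβ₀.le⟩
    · refine ⟨m, hℰ, hm, β₀, hβ₀, fun n hn => ?_⟩
      obtain ⟨k, hk, hk', hr⟩ := ih n hn (by simpa using hΓ)
      by_cases hkn : k = n
      · exact hkn ▸ hr
      · exact absurd ⟨k, by simpa [hkn] using hk, by simpa [hkn] using hk', hr⟩ hold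

/-- Existence of the ordinal ranks `β(m)` satisfying condition (3) in the proof of
Theorem 7. -/
theorem exists_ordinal_ranks (R : ℕ → ℕ → Prop) (α : Ordinal)
    (h : ∀ n : ℕ, D R {n} α {(true, n)}) :
    ∃ β : ℕ → Ordinal, (∀ m : ℕ, β m ≤ α) ∧
      ∀ k m : ℕ, k < m → Relation.TransGen R m k → β m < β k := by
  have hα : ∀ n, RankBound R α n := fun n => by
    obtain ⟨m, hm, -, hr⟩ := (h n).exists_rankBound (by simp)
    rwa [Finset.mem_singleton.mp hm] at hr
  refine ⟨fun m => sInf {β | RankBound R β m}, fun m => csInf_le' (hα m), fun k m _ hmk => ?_⟩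
  have hk : RankBound R (sInf {β | RankBound R β k}) k :=
    csInf_mem (s := {β | RankBound R β k}) ⟨α, hα k⟩
  obtain ⟨γ, hγ, hpred⟩ := hk
  have hm : sInf {β | RankBound R β m} ≤ γ := csInf_le' (hpred m hmk)
  exact hm.trans_lt hγ
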